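/- Let M ∈ ℚ_+^{6×6} be the matrix with rows (1/8, 1/2, 17/22, 0, 0, 0), (0, 0, 0, 1/2, 3/4, 7/12), (3/4, 3/4, 3/11, 2, 1/2, 1/6), (1/4, 1/4, 8/11, 1/4, 19/8, 55/24), (1/2, 1/8, 1/11, 1/8, 15/16, 17/16), (11/16, 5/16, 7/44, 1/16, 7/32, 43/96). Then the restricted nonnegative rank of M over ℚ equals 6; in particular, there do not exist rational nonnegative matrices W ∈ ℚ_+^{6×5} and H ∈ ℚ_+^{5×6} with M = W·H and rank(W) = rank(M), even though rrk+(M) = 5 over ℝ. -/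

import Mathlib

open Matrix

/-- The restricted nonnegative rank over `ℝ`: the smallest inner dimension of a
nonnegative factorization `M = W * H` with `rank W = rank M`. -/
noncomputable def rrkPos {n m : ℕ} (M : Matrix (Fin n) (Fin m) ℝ) : ℕ :=
  sInf {d : ℕ | ∃ W : Matrix (Fin n) (Fin d) ℝ, ∃ H : Matrix (Fin d) (Fin m) ℝ,
    (∀ i k, 0 ≤ W i k) ∧ (∀ k j, 0 ≤ H k j) ∧ M = W * H ∧ W.rank = M.rank}

/-- The restricted nonnegative rank over `ℚ` of a rational matrix. -/
noncomputable def rrkPosQ {n m : ℕ} (M : Matrix (Fin n) (Fin m) ℚ) : ℕ :=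
  sInf {d : ℕ | ∃ W : Matrix (Fin n) (Fin d) ℚ, ∃ H : Matrix (Fin d) (Fin m) ℚ,
    (∀ i k, 0 ≤ W i k) ∧ (∀ k j, 0 ≤ H k j) ∧ M = W * H ∧ W.rank = M.rank}

/-- The `6 × 6` rational matrix of Theorem 5 of the paper. -/
def paperMatrix : Matrix (Fin 6) (Fin 6) ℚ :=
  !![1/8,   1/2,  17/22, 0,    0,     0;
     0,     0,    0,     1/2,  3/4,   7/12;
     3/4,   3/4,  3/11,  2,    1/2,   1/6;
     1/4,   1/4,  8/11,  1/4,  19/8,  55/24;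
     1/2,   1/8,  1/11,  1/8,  15/16, 17/16;
     11/16, 5/16, 7/44,  1/16, 7/32,  43/96]

/-!
The columns of the left factor of a restricted factorization of `paperMatrix` generate a cone in the
column space of `paperMatrix`, which has dimension four. A column of `paperMatrix` vanishing in row
`1` is a combination of generators vanishing in row `1`, so three prescribed points lie in the hull
of the generators on a planar face, and similarly for row `0`. Each face needs at least two
generators off the edge common to both faces. With five generators this leaves at most one on the
edge; if it is there, it is the apex of a triangle nested between the three points and the polygon
cut out by the nonnegativity constraints, in either face. Sweeping the sides of that triangle bounds
the slope of the apex by `√2` from above in one face and from below in the other, and it excludes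
the degenerate triangles without an edge generator. So the slope is a square root of `2`, and inner
dimension `5` is attained exactly when `2` is a square in the field.
-/

open Finset PointedCone

namespace RestrictedNMF

theorem card_filter_add_card_filter_add_card_filter_le {κ R : Type*} [Fintype κ] [Zero R]
    [DecidableEq R] (a b : κ → R) :
    #{k ∈ ({k | b k = 0} : Finset κ) | a k ≠ 0} + #{k ∈ ({k | a k = 0} : Finset κ) | b k ≠ 0} +
      #{k ∈ ({k | b k = 0} : Finset κ) | a k = 0} ≤ Fintype.card κ := by
  have hb := card_filter_add_card_filter_not (s := univ) (fun k => b k = 0)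
  have hab := card_filter_add_card_filter_not (s := ({k | b k = 0} : Finset κ)) (fun k => a k = 0)
  have ha : #{k ∈ ({k | a k = 0} : Finset κ) | b k ≠ 0} ≤ #{k | b k ≠ 0} :=
    card_le_card (filter_subset_filter _ (filter_subset _ _))
  simp only [← ne_eq, card_univ] at hb hab
  omega

section LinearAlgebra

variable {K : Type*} [Field K] {ι κ μ : Type*} [Fintype κ] [Fintype μ]

theorem exists_mul_eq_of_rank_eq [Finite ι] {W : Matrix ι κ K} {H : Matrix κ μ K}
    (hrank : W.rank = (W * H).rank) : ∃ X : Matrix μ κ K, W * H * X = W := by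
  classical
  have hle : LinearMap.range (W * H).mulVecLin ≤ LinearMap.range W.mulVecLin := by
    rw [mulVecLin_mul]
    exact LinearMap.range_comp_le_range _ _
  have hrange := Submodule.eq_of_le_of_finrank_eq hle hrank.symm
  have hcol (k : κ) : ∃ x, (W * H).mulVecLin x = W.col k :=
    LinearMap.mem_range.1 (hrange.symm ▸ ⟨Pi.single k 1, mulVec_single_one W k⟩)
  choose x hx using hcol
  exact ⟨(of x)ᵀ, ext fun i k => congrFun (hx k) i⟩

theorem rank_eq_of_mul_eq_one {ν : Type*} [Fintype ν] [DecidableEq ν] {C : Matrix ι ν K}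
    {N : Matrix ν μ K} {R : Matrix μ ν K} {T : Matrix ν κ K} {H : Matrix κ μ K} (hNR : N * R = 1)
    (hTH : T * H = N) : (C * T).rank = (C * N).rank := by
  have hN : C * N = C * T * H := by rw [Matrix.mul_assoc, hTH]
  have hT : C * T = C * N * (R * T) := by
    rw [Matrix.mul_assoc, ← Matrix.mul_assoc N, hNR, Matrix.one_mul]
  exact le_antisymm (hT ▸ rank_mul_le_left (C * N) (R * T)) (hN ▸ rank_mul_le_left (C * T) H)

end LinearAlgebra

section EdgePoint

variable {K : Type*} [CommRing K]

/-- The point at which the line through `e` and `p` meets the edge `σ ⬝ᵥ v = 0`, in homogeneous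
coordinates. -/
def edgePoint (σ e p : Fin 3 → K) : Fin 3 → K :=
  (σ ⬝ᵥ e) • p - (σ ⬝ᵥ p) • e

theorem bottom_dotProduct (v : Fin 3 → K) : ![0, 0, 1] ⬝ᵥ v = v 2 := by
  simp only [vec3_dotProduct, Matrix.cons_val, zero_mul, zero_add, one_mul]

theorem edgePoint_bottom {e : Fin 3 → K} (he : e 0 = 0) (p : Fin 3 → K) :
    edgePoint ![0, 0, 1] e p = ![e 2 * p 0, e 2 * p 1 - p 2 * e 1, 0] := by
  rw [edgePoint, bottom_dotProduct, bottom_dotProduct]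
  ext i
  fin_cases i <;> simp [he, mul_comm]

end EdgePoint

section Cone

variable {K : Type*} [Field K] [LinearOrder K] [IsStrictOrderedRing K]

theorem dotProduct_nonneg_of_mem_hull {ι : Type*} [Fintype ι] {f p : ι → K} {S : Set (ι → K)}
    (hf : ∀ v ∈ S, 0 ≤ f ⬝ᵥ v) (hp : p ∈ hull K S) : 0 ≤ f ⬝ᵥ p := by
  induction hp using Submodule.span_induction with
  | mem v hv => exact hf v hv
  | zero => simp
  | add v w _ _ hv hw => rw [dotProduct_add]; exact add_nonneg hv hw
  | smul a v _ hv => rw [← Nonneg.coe_smul, dotProduct_smul]; exact mul_nonneg a.2 hv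

section Factorization

variable {ι κ μ : Type*} [Fintype κ] {W : Matrix ι κ K} {H : Matrix κ μ K}

theorem right_eq_zero_of_mul_apply_eq_zero (hW : ∀ i k, 0 ≤ W i k) (hH : ∀ k j, 0 ≤ H k j)
    {i : ι} {j : μ} (h : (W * H) i j = 0) {k : κ} (hk : W i k ≠ 0) : H k j = 0 := by
  have hsum := (sum_eq_zero_iff_of_nonneg fun k _ => mul_nonneg (hW i k) (hH k j)).1 h
  exact (mul_eq_zero.1 (hsum k (mem_univ k))).resolve_left hk

theorem col_mul_mem_hull {j : μ} (hH : ∀ k, 0 ≤ H k j) {s : Set κ} (hs : ∀ k ∉ s, H k j = 0) :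
    (W * H).col j ∈ hull K (W.col '' s) := by
  have hcol : (W * H).col j = ∑ k, H k j • W.col k := by
    ext i
    simp [mul_apply, mul_comm]
  rw [hcol]
  refine sum_mem fun k _ => ?_
  by_cases hk : k ∈ s
  · exact Submodule.smul_mem _ (⟨H k j, hH k⟩ : {a : K // 0 ≤ a})
      (subset_hull (Set.mem_image_of_mem _ hk))
  · rw [hs k hk, zero_smul]
    exact zero_mem _

end Factorization

theorem triple_product_nonneg_of_mem_hull {e u w p : Fin 3 → K} (h : 0 ≤ e ⬝ᵥ u ⨯₃ w)
    (hp : p ∈ hull K {e, u, w}) :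
    0 ≤ p ⬝ᵥ u ⨯₃ w ∧ 0 ≤ e ⬝ᵥ p ⨯₃ w ∧ 0 ≤ e ⬝ᵥ u ⨯₃ p := by
  refine ⟨?_, ?_, ?_⟩
  · rw [dotProduct_comm]
    refine dotProduct_nonneg_of_mem_hull ?_ hp
    rintro v (rfl | rfl | rfl) <;> rw [dotProduct_comm] <;> simp [h]
  · rw [triple_product_permutation, dotProduct_comm]
    refine dotProduct_nonneg_of_mem_hull ?_ hp
    rintro v (rfl | rfl | rfl) <;> rw [dotProduct_comm, ← triple_product_permutation] <;> simp [h]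
  · rw [← triple_product_permutation, dotProduct_comm]
    refine dotProduct_nonneg_of_mem_hull ?_ hp
    rintro v (rfl | rfl | rfl) <;> rw [dotProduct_comm, triple_product_permutation] <;> simp [h]

theorem dotProduct_edgePoint_nonneg {f σ e p v : Fin 3 → K} (he : e 0 = 0) (hp : 0 ≤ p 0)
    (hv : 0 < v 0) (hσv : 0 ≤ σ ⬝ᵥ v) (hσe : 0 ≤ σ ⬝ᵥ e) (hfv : 0 ≤ f ⬝ᵥ v) (hfe : f ⬝ᵥ e ≤ 0)
    (hside : (f ⬝ᵥ ![0, σ 2, -σ 1]) * (e ⬝ᵥ p ⨯₃ v) ≤ 0) : 0 ≤ f ⬝ᵥ edgePoint σ e p := by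
  -- The four functionals `f`, `v ↦ v 0`, `v ↦ e ⬝ᵥ p ⨯₃ v` and `σ` are linearly dependent.
  have hdep : (f ⬝ᵥ edgePoint σ e p) * v 0 = (σ ⬝ᵥ e) * p 0 * (f ⬝ᵥ v)
      - (f ⬝ᵥ ![0, σ 2, -σ 1]) * (e ⬝ᵥ p ⨯₃ v) - p 0 * (f ⬝ᵥ e) * (σ ⬝ᵥ v) := by
    simp only [edgePoint, dotProduct_sub, dotProduct_smul, smul_eq_mul, cross_apply,
      vec3_dotProduct, Matrix.cons_val, he]
    ring
  have hσpf := mul_nonneg (mul_nonneg hσe hp) hfv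
  have hpfσ := mul_nonpos_of_nonpos_of_nonneg (mul_nonpos_of_nonneg_of_nonpos hp hfe) hσv
  exact nonneg_of_mul_nonneg_left (by linarith) hv

/-- The cone of nonnegative vectors with nonnegative slack `σ ⬝ᵥ v`. It is the cone over the planar
face in which the generators of the factorization that vanish in a given row must lie. -/
def faceCone (σ : Fin 3 → K) : Set (Fin 3 → K) :=
  {v | (∀ i, 0 ≤ v i) ∧ 0 ≤ σ ⬝ᵥ v}

/-- A slack functional `σ` and three points in homogeneous coordinates such that in the chart
`v 0 = 1` a point of `faceCone σ` with `v 1 < 1` lies strictly above the height `v 2` of `p 1`. As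
`p 2` has `v 1 < 1`, covering `p 1` and `p 2` takes two generators off the edge `v 0 = 0`. -/
structure IsFaceConfig (σ : Fin 3 → K) (p : Fin 3 → Fin 3 → K) : Prop where
  slack_one_pos : 0 < σ 1
  slack_two_pos : 0 < σ 2
  points_pos : ∀ i, 0 < p i 0
  points_two_lt : p 2 1 < p 2 0
  slack_points_one_le : σ 2 * p 1 2 ≤ -(σ 0 + σ 1) * p 1 0

/-- The point `e` of the edge `v 0 = 0` completes to a triangle in `faceCone σ`, with the other two
vertices off the edge, that contains the three points `p i`. -/
def IsApex (σ : Fin 3 → K) (p : Fin 3 → Fin 3 → K) (e : Fin 3 → K) : Prop :=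
  e 0 = 0 ∧ e ∈ faceCone σ ∧ ∃ u ∈ faceCone σ, ∃ w ∈ faceCone σ,
    0 < u 0 ∧ 0 < w 0 ∧ ∀ i, p i ∈ hull K {e, u, w}

section Face

variable {σ : Fin 3 → K} {p : Fin 3 → Fin 3 → K} {e u w : Fin 3 → K}

theorem IsFaceConfig.points_one_mul_lt (hp : IsFaceConfig σ p) (hu : u ∈ faceCone σ)
    (hu01 : u 1 < u 0) : p 1 2 * u 0 < u 2 * p 1 0 := by
  have hslack : 0 ≤ σ 0 * u 0 + σ 1 * u 1 + σ 2 * u 2 := vec3_dotProduct σ u ▸ hu.2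
  have hσu : -(σ 0 + σ 1) * u 0 < σ 2 * u 2 := by
    linarith [mul_lt_mul_of_pos_left hu01 hp.slack_one_pos]
  have hu0 : 0 < u 0 := (hu.1 1).trans_lt hu01
  refine lt_of_mul_lt_mul_left (a := σ 2) ?_ hp.slack_two_pos.le
  linarith [mul_lt_mul_of_pos_right hσu (hp.points_pos 1),
    mul_le_mul_of_nonneg_right hp.slack_points_one_le hu0.le]

theorem IsFaceConfig.two_le_card {κ : Type*} {F : Finset κ} {g : κ → Fin 3 → K}
    (hp : IsFaceConfig σ p) (hg : ∀ k ∈ F, g k ∈ faceCone σ) (hmem : ∀ i, p i ∈ hull K (g '' F)) :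
    2 ≤ #{k ∈ F | g k 0 ≠ 0} := by
  by_contra! hcard
  have hunique := card_le_one.1 (Nat.lt_succ_iff.1 hcard)
  simp only [mem_filter, and_imp] at hunique
  obtain ⟨l, hl, hl0⟩ : ∃ l ∈ F, g l 0 ≠ 0 := by
    by_contra! hF
    have := dotProduct_nonneg_of_mem_hull (f := -Pi.single 0 1)
      (by rintro _ ⟨k, hk, rfl⟩; simp [hF k hk]) (hmem 1)
    simp only [neg_dotProduct, single_one_dotProduct] at this
    linarith [hp.points_pos 1]
  have hl0 : 0 < g l 0 := ((hg l hl).1 0).lt_of_ne' hl0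
  have hcross (a : Fin 3) (i : Fin 3) : g l a * p i 0 ≤ g l 0 * p i a := by
    have := dotProduct_nonneg_of_mem_hull (f := g l 0 • Pi.single a 1 - g l a • Pi.single 0 1) ?_
      (hmem i)
    · simpa [sub_dotProduct, smul_dotProduct] using this
    rintro _ ⟨k, hk, rfl⟩
    by_cases hk0 : g k 0 = 0
    · simpa [sub_dotProduct, smul_dotProduct, hk0] using mul_nonneg hl0.le ((hg k hk).1 a)
    · rw [hunique k hk hk0 l hl hl0.ne']
      simp [sub_dotProduct, smul_dotProduct, mul_comm]
  have hl01 : g l 1 < g l 0 := by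
    refine lt_of_mul_lt_mul_right ((hcross 1 2).trans_lt ?_) (hp.points_pos 2).le
    exact mul_lt_mul_of_pos_left hp.points_two_lt hl0
  linarith [hp.points_one_mul_lt (hg l hl) hl01, hcross 2 1]

theorem IsFaceConfig.right_one_lt (hp : IsFaceConfig σ p) (he : ∀ i, 0 ≤ e i)
    (he0 : e 0 = 0) (hw01 : w 0 ≤ w 1) (hmem : p 2 ∈ hull K {e, u, w}) : u 1 < u 0 := by
  by_contra! hu01
  have hp2 : 0 ≤ ![-1, 1, 0] ⬝ᵥ p 2 := by
    refine dotProduct_nonneg_of_mem_hull ?_ hmem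
    rintro v (rfl | rfl | rfl) <;> simp only [vec3_dotProduct, Matrix.cons_val] <;>
      linarith [he 1]
  simp only [vec3_dotProduct, Matrix.cons_val] at hp2
  linarith [hp.points_two_lt]

theorem IsFaceConfig.left_zero_le (hp : IsFaceConfig σ p) (he : ∀ i, 0 ≤ e i) (he0 : e 0 = 0)
    (he2 : 0 < e 2) (hw : ∀ i, 0 ≤ w i) (horient : 0 ≤ e ⬝ᵥ p 0 ⨯₃ w)
    (hsteep : edgePoint ![0, 0, 1] e (p 0) 0 ≤ edgePoint ![0, 0, 1] e (p 0) 1) : w 0 ≤ w 1 := by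
  simp only [edgePoint_bottom he0, vec3_dotProduct, cross_apply, Matrix.cons_val, he0]
    at hsteep horient
  have hep := mul_pos he2 (hp.points_pos 0)
  refine le_of_mul_le_mul_left (a := e 2 * p 0 0) ?_ hep
  linarith [mul_le_mul_of_nonneg_right hsteep (hw 0),
    mul_nonneg (mul_nonneg (he 1) (hp.points_pos 0).le) (hw 2)]

theorem IsFaceConfig.nested_of_orientation (hp : IsFaceConfig σ p) (he0 : e 0 = 0)
    (he2 : 0 < e 2) (he : e ∈ faceCone σ) (hu : u ∈ faceCone σ) (hw : w ∈ faceCone σ)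
    (hu0 : 0 < u 0) (hw0 : 0 < w 0) (hmem : ∀ i, p i ∈ hull K {e, u, w})
    (horient : 0 ≤ e ⬝ᵥ u ⨯₃ w) {q : Fin 3 → K} (hq : q = edgePoint ![0, 0, 1] e (p 0))
    (hsteep : q 0 ≤ q 1) (hside : 0 ≤ q ⨯₃ p 1 ⬝ᵥ ![0, σ 2, -σ 1]) (hapex : q ⨯₃ p 1 ⬝ᵥ e ≤ 0) :
    0 ≤ q ⨯₃ p 1 ⬝ᵥ edgePoint σ e (p 2) := by
  obtain ⟨-, hp0w, -⟩ := triple_product_nonneg_of_mem_hull horient (hmem 0)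
  obtain ⟨hp1uw, -, hup1⟩ := triple_product_nonneg_of_mem_hull horient (hmem 1)
  obtain ⟨-, -, hup2⟩ := triple_product_nonneg_of_mem_hull horient (hmem 2)
  have hw01 : w 0 ≤ w 1 := hp.left_zero_le he.1 he0 he2 hw.1 hp0w (hq ▸ hsteep)
  have hu01 : u 1 < u 0 := hp.right_one_lt he.1 he0 hw01 (hmem 2)
  have hqup : 0 ≤ (p 1 ⨯₃ u) ⬝ᵥ q := by
    subst hq
    refine dotProduct_edgePoint_nonneg he0 (hp.points_pos 0).le hw0 ?_ ?_ ?_ ?_ ?_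
    · rw [bottom_dotProduct]
      exact hw.1 2
    · rw [bottom_dotProduct]
      exact he2.le
    · rwa [dotProduct_comm, ← triple_product_permutation, ← triple_product_permutation]
    · rw [← cross_anticomm, neg_dotProduct, dotProduct_comm, neg_nonpos]
      exact hup1
    · refine mul_nonpos_of_nonpos_of_nonneg ?_ hp0w
      simp only [cross_apply, vec3_dotProduct, Matrix.cons_val]
      linarith [hp.points_one_mul_lt hu hu01]
  have hpos : 0 ≤ (q ⨯₃ p 1) ⬝ᵥ u := by
    rwa [dotProduct_comm, triple_product_permutation, dotProduct_comm]
  refine dotProduct_edgePoint_nonneg he0 (hp.points_pos 2).le hu0 hu.2 he.2 hpos hapex ?_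
  rw [← cross_anticomm u, dotProduct_neg, mul_neg, neg_nonpos]
  exact mul_nonneg hside hup2

theorem IsFaceConfig.nested_of_isApex (hp : IsFaceConfig σ p) (he : IsApex σ p e) (he2 : 0 < e 2)
    {q : Fin 3 → K} (hq : q = edgePoint ![0, 0, 1] e (p 0)) (hsteep : q 0 ≤ q 1)
    (hside : 0 ≤ q ⨯₃ p 1 ⬝ᵥ ![0, σ 2, -σ 1]) (hapex : q ⨯₃ p 1 ⬝ᵥ e ≤ 0) :
    0 ≤ q ⨯₃ p 1 ⬝ᵥ edgePoint σ e (p 2) := by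
  obtain ⟨he0, hσe, u, hu, w, hw, hu0, hw0, hmem⟩ := he
  obtain horient | horient := le_total 0 (e ⬝ᵥ u ⨯₃ w)
  · exact hp.nested_of_orientation he0 he2 hσe hu hw hu0 hw0 hmem horient hq hsteep hside hapex
  · rw [← cross_anticomm, dotProduct_neg, neg_nonpos] at horient
    rw [Set.pair_comm] at hmem
    exact hp.nested_of_orientation he0 he2 hσe hw hu hw0 hu0 hmem horient hq hsteep hside hapex

theorem exists_isApex {κ : Type*} {F : Finset κ} {g : κ → Fin 3 → K} (hσ : 0 ≤ σ 2)
    (hg : ∀ k ∈ F, g k ∈ faceCone σ) (hmem : ∀ i, p i ∈ hull K (g '' F))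
    (hoff : #{k ∈ F | g k 0 ≠ 0} = 2) (hon : #{k ∈ F | g k 0 = 0} ≤ 1)
    (hcorner : ¬ IsApex σ p ![0, 0, 1]) : ∃ k ∈ F, g k ≠ 0 ∧ IsApex σ p (g k) := by
  classical
  obtain ⟨k, l, -, hkl⟩ := card_eq_two.1 hoff
  have hk : k ∈ F ∧ g k 0 ≠ 0 := mem_filter.1 (hkl ▸ mem_insert_self k {l})
  have hl : l ∈ F ∧ g l 0 ≠ 0 := mem_filter.1 (hkl ▸ mem_insert_of_mem (mem_singleton_self l))
  have hapex {e : Fin 3 → K} (he0 : e 0 = 0) (he : e ∈ faceCone σ)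
      (hon : ∀ m ∈ F, g m 0 = 0 → g m = 0 ∨ g m = e) : IsApex σ p e := by
    refine ⟨he0, he, g k, hg k hk.1, g l, hg l hl.1, ((hg k hk.1).1 0).lt_of_ne' hk.2,
      ((hg l hl.1).1 0).lt_of_ne' hl.2, fun i => ?_⟩
    refine Submodule.span_le.2 ?_ (hmem i)
    rintro _ ⟨m, hm, rfl⟩
    by_cases hm0 : g m 0 = 0
    · obtain h | h := hon m hm hm0
      · rw [h]; exact zero_mem _
      · exact subset_hull (by simp [h])
    · have : m ∈ ({k, l} : Finset κ) := hkl ▸ mem_filter.2 ⟨hm, hm0⟩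
      obtain rfl | rfl : m = k ∨ m = l := by simpa using this
      all_goals exact subset_hull (by simp)
  by_contra! hno
  refine hcorner (hapex rfl ⟨?_, ?_⟩ fun m hm hm0 => ?_)
  · intro i; fin_cases i <;> simp
  · simpa only [vec3_dotProduct, Matrix.cons_val, mul_zero, mul_one, zero_add] using hσ
  · by_contra! h
    refine hno m hm h.1 (hapex hm0 (hg m hm) fun m' hm' hm'0 => Or.inr ?_)
    exact congrArg g (card_le_one.1 hon m' (mem_filter.2 ⟨hm', hm'0⟩) m (mem_filter.2 ⟨hm, hm0⟩))

end Face

section Slopes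

variable (K) in
/-- The slack functional of the face on which row `1` vanishes, in the coordinates given by the
rows `0`, `2` and `3`: the slack is row `4`. -/
def slackA : Fin 3 → K :=
  ![-1, 1 / 2, 1]

variable (K) in
/-- The columns `0`, `1` and `2` of `paperMatrix` in the rows `0`, `2` and `3`. -/
def pointsA : Fin 3 → Fin 3 → K :=
  ![![1 / 8, 3 / 4, 1 / 4], ![1 / 2, 3 / 4, 1 / 4], ![17 / 22, 3 / 11, 8 / 11]]

variable (K) in
/-- The slack functional of the face on which row `0` vanishes, in the coordinates given by the
rows `1`, `3` and `2`: the slack is row `5`. -/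
def slackB : Fin 3 → K :=
  ![-27 / 8, 1, 3 / 4]

variable (K) in
/-- The columns `5`, `4` and `3` of `paperMatrix` in the rows `1`, `3` and `2`. -/
def pointsB : Fin 3 → Fin 3 → K :=
  ![![7 / 12, 55 / 24, 1 / 6], ![3 / 4, 19 / 8, 1 / 2], ![1 / 2, 1 / 4, 2]]

theorem isFaceConfig_slackA : IsFaceConfig (slackA K) (pointsA K) where
  slack_one_pos := by simp only [slackA, Matrix.cons_val]; norm_num
  slack_two_pos := by simp only [slackA, Matrix.cons_val]; norm_num
  points_pos i := by fin_cases i <;> norm_num [pointsA]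
  points_two_lt := by simp only [pointsA, Matrix.cons_val]; norm_num
  slack_points_one_le := by
    simp only [slackA, pointsA, Matrix.cons_val]
    norm_num

theorem isFaceConfig_slackB : IsFaceConfig (slackB K) (pointsB K) where
  slack_one_pos := by simp only [slackB, Matrix.cons_val]; norm_num
  slack_two_pos := by simp only [slackB, Matrix.cons_val]; norm_num
  points_pos i := by fin_cases i <;> norm_num [pointsB]
  points_two_lt := by simp only [pointsB, Matrix.cons_val]; norm_num
  slack_points_one_le := by
    simp only [slackB, pointsB, Matrix.cons_val]
    norm_num

theorem two_mul_sq_le_sq_of_isApex_slackA {e : Fin 3 → K} (he : IsApex (slackA K) (pointsA K) e) :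
    2 * e 2 ^ 2 ≤ e 1 ^ 2 := by
  by_contra! hlt
  have he2 : 0 < e 2 := (he.2.1.1 2).lt_of_ne' fun h => by
    rw [h] at hlt
    linarith [sq_nonneg (e 1)]
  have hslope : 4 * e 1 < 7 * e 2 :=
    lt_of_pow_lt_pow_left₀ 2 (by positivity) (by linarith [pow_pos he2 2])
  set q := edgePoint ![0, 0, 1] e (pointsA K 0) with hq
  have hqe : q = ![1 / 8 * e 2, 3 / 4 * e 2 - 1 / 4 * e 1, 0] := by
    rw [hq, edgePoint_bottom he.1]
    simp only [pointsA, Matrix.cons_val]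
    ring_nf
  have hside : q ⨯₃ pointsA K 1 ⬝ᵥ ![0, slackA K 2, -slackA K 1] = (7 * e 2 - 4 * e 1) / 64 := by
    simp only [hqe, slackA, pointsA, cross_apply, vec3_dotProduct, Matrix.cons_val]
    ring
  have hapex : q ⨯₃ pointsA K 1 ⬝ᵥ e = 3 / 32 * (e 2 * (e 1 - 3 * e 2)) := by
    simp only [hqe, pointsA, cross_apply, vec3_dotProduct, Matrix.cons_val, he.1]
    ring
  have hnested : q ⨯₃ pointsA K 1 ⬝ᵥ edgePoint (slackA K) e (pointsA K 2) =
      15 / 704 * (e 1 ^ 2 - 2 * e 2 ^ 2) := by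
    simp only [hqe, edgePoint, slackA, pointsA, cross_apply, vec3_dotProduct, Matrix.cons_val,
      Pi.sub_apply, Pi.smul_apply, smul_eq_mul, he.1]
    ring
  have := isFaceConfig_slackA.nested_of_isApex he he2 hq
    (by simp only [hqe, Matrix.cons_val]; linarith) (by rw [hside]; linarith)
    (by rw [hapex]; linarith [mul_nonneg he2.le (by linarith : 0 ≤ 3 * e 2 - e 1)])
  linarith

theorem sq_le_two_mul_sq_of_isApex_slackB {e : Fin 3 → K} (he : IsApex (slackB K) (pointsB K) e) :
    e 2 ^ 2 ≤ 2 * e 1 ^ 2 := by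
  by_contra! hlt
  have he1 : 0 ≤ e 1 := he.2.1.1 1
  have he2 : 0 < e 2 := (he.2.1.1 2).lt_of_ne' fun h => by
    rw [h] at hlt
    linarith [sq_nonneg (e 1)]
  have hslope : 12 * e 1 < 11 * e 2 :=
    lt_of_pow_lt_pow_left₀ 2 (by positivity) (by linarith [sq_nonneg (e 1)])
  set q := edgePoint ![0, 0, 1] e (pointsB K 0) with hq
  have hqe : q = ![7 / 12 * e 2, 55 / 24 * e 2 - 1 / 6 * e 1, 0] := by
    rw [hq, edgePoint_bottom he.1]
    simp only [pointsB, Matrix.cons_val]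
    ring_nf
  have hside : q ⨯₃ pointsB K 1 ⬝ᵥ ![0, slackB K 2, -slackB K 1] =
      (11 * e 2 - 12 * e 1) / 96 := by
    simp only [hqe, slackB, pointsB, cross_apply, vec3_dotProduct, Matrix.cons_val]
    ring
  have hapex : q ⨯₃ pointsB K 1 ⬝ᵥ e = -1 / 6 * (e 2 * (e 1 + 2 * e 2)) := by
    simp only [hqe, pointsB, cross_apply, vec3_dotProduct, Matrix.cons_val, he.1]
    ring
  have hnested : q ⨯₃ pointsB K 1 ⬝ᵥ edgePoint (slackB K) e (pointsB K 2) =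
      5 / 48 * (2 * e 1 ^ 2 - e 2 ^ 2) := by
    simp only [hqe, edgePoint, slackB, pointsB, cross_apply, vec3_dotProduct, Matrix.cons_val,
      Pi.sub_apply, Pi.smul_apply, smul_eq_mul, he.1]
    ring
  have := isFaceConfig_slackB.nested_of_isApex he he2 hq
    (by simp only [hqe, Matrix.cons_val]; linarith) (by rw [hside]; linarith)
    (by rw [hapex]; linarith [mul_nonneg he2.le (by linarith : 0 ≤ e 1 + 2 * e 2)])
  linarith

end Slopes

/-- `W * H` is a restricted nonnegative factorization of `M`: the factors are nonnegative and `W`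
has the same rank as `M`. -/
def IsRNMF {ι κ μ : Type*} [Fintype κ] [Fintype μ] (M : Matrix ι μ K) (W : Matrix ι κ K)
    (H : Matrix κ μ K) : Prop :=
  (∀ i k, 0 ≤ W i k) ∧ (∀ k j, 0 ≤ H k j) ∧ M = W * H ∧ W.rank = M.rank

/-- `M` has a restricted nonnegative factorization of inner dimension `d`. -/
def HasRNMF {n m : ℕ} (M : Matrix (Fin n) (Fin m) K) (d : ℕ) : Prop :=
  ∃ W : Matrix (Fin n) (Fin d) K, ∃ H : Matrix (Fin d) (Fin m) K, IsRNMF M W H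

theorem hasRNMF_of_nonneg {n m : ℕ} {M : Matrix (Fin n) (Fin m) K} (hM : ∀ i j, 0 ≤ M i j) :
    HasRNMF M m :=
  ⟨M, 1, hM, fun k j => by rw [one_apply]; split <;> simp, (Matrix.mul_one M).symm, rfl⟩

theorem IsRNMF.col_submatrix_mem_hull {ι κ μ : Type*} [Fintype κ] [Fintype μ] {M : Matrix ι μ K}
    {W : Matrix ι κ K} {H : Matrix κ μ K} (h : IsRNMF M W H) {i : ι} {j : μ} (hij : M i j = 0)
    {ι' : Type*} (ρ : ι' → ι) :
    (M.submatrix ρ id).col j ∈ hull K ((W.submatrix ρ id).col '' ({k | W i k = 0} : Finset κ)) := by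
  obtain ⟨hW, hH, rfl, -⟩ := h
  exact col_mul_mem_hull (W := W.submatrix ρ id) (hH · j) fun _ hk =>
    right_eq_zero_of_mul_apply_eq_zero hW hH hij (by simpa using hk)

end Cone

section PaperMatrix

variable {K : Type*} [Field K]

variable (K) in
/-- The coefficients expressing the six rows of `paperMatrix` in terms of the first four. -/
def rowCoeffs : Matrix (Fin 6) (Fin 4) K :=
  !![1, 0, 0, 0;
     0, 1, 0, 0;
     0, 0, 1, 0;
     0, 0, 0, 1;
     -1, -9 / 4, 1 / 2, 1;
     -1, -27 / 8, 3 / 4, 1]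

variable (K) in
/-- The first four rows of `paperMatrix`. -/
def topRows : Matrix (Fin 4) (Fin 6) K :=
  !![1 / 8, 1 / 2, 17 / 22, 0, 0, 0;
     0, 0, 0, 1 / 2, 3 / 4, 7 / 12;
     3 / 4, 3 / 4, 3 / 11, 2, 1 / 2, 1 / 6;
     1 / 4, 1 / 4, 8 / 11, 1 / 4, 19 / 8, 55 / 24]

theorem rowCoeffs_mul {κ : Type*} (T : Matrix (Fin 4) κ K) :
    rowCoeffs K * T = of ![T 0, T 1, T 2, T 3,
      -T 0 - (9 / 4 : K) • T 1 + (1 / 2 : K) • T 2 + T 3,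
      -T 0 - (27 / 8 : K) • T 1 + (3 / 4 : K) • T 2 + T 3] := by
  ext i k
  fin_cases i <;> simp [rowCoeffs, mul_apply, Fin.sum_univ_four] <;> ring

variable [CharZero K]

theorem paperMatrix_map_cast :
    paperMatrix.map ((↑) : ℚ → K) = rowCoeffs K * topRows K := by
  rw [rowCoeffs_mul]
  ext i j
  fin_cases i <;> fin_cases j <;> simp [paperMatrix, topRows] <;> norm_num

theorem paperMatrix_nonneg (i j : Fin 6) : 0 ≤ paperMatrix i j := by
  fin_cases i <;> fin_cases j <;> norm_num [paperMatrix]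

theorem exists_topRows_mul_eq_one : ∃ R : Matrix (Fin 6) (Fin 4) K, topRows K * R = 1 := by
  -- The inverse of the leading `4 × 4` block, padded with zeros.
  refine ⟨!![-8 / 3, -106 / 21, 20 / 21, 52 / 21;
             8 / 3, -16 / 21, 4 / 7, -64 / 21;
             0, 55 / 42, -11 / 21, 11 / 7;
             0, 2, 0, 0;
             0, 0, 0, 0;
             0, 0, 0, 0], ?_⟩
  ext i j
  fin_cases i <;> fin_cases j <;> simp [topRows, mul_apply, Fin.sum_univ_six] <;> norm_num

/-- The first four rows of the left factor of a restricted nonnegative factorization of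
`paperMatrix` of inner dimension `5`, where `s` is a square root of `2`. The first column is the
apex shared by the two faces. -/
def topLeftFactor (s : K) : Matrix (Fin 4) (Fin 5) K :=
  !![0, 17, 1, 0, 0;
     0, 0, 0, 14, 4;
     s, 10 - 4 * s, 6 - 2 * s, 0, 10 + 4 * s;
     1, 12 + 2 * s, 0, 55 - 2 * s, 6 - 3 * s]

/-- The right factor of a restricted nonnegative factorization of `paperMatrix` of inner
dimension `5`, where `s` is a square root of `2`. -/
def rightFactor (s : K) : Matrix (Fin 5) (Fin 6) K :=
  !![1 / 4, 0, (2 - s) / 11, (3 * s - 4) / 8, 0, s / 12;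
     0, (6 - s) / 272, 1 / 22, 0, 0, 0;
     1 / 8, (2 + s) / 16, 0, 0, 0, 0;
     0, 0, 0, 0, (31 + 8 * s) / 952, 1 / 24;
     0, 0, 0, 1 / 8, (5 - 2 * s) / 68, 0]

theorem topLeftFactor_mul_rightFactor {s : K} (hs : s * s = 2) :
    topLeftFactor s * rightFactor s = topRows K := by
  ext i j
  fin_cases i <;> fin_cases j <;>
    simp [topLeftFactor, rightFactor, topRows, mul_apply, Fin.sum_univ_five] <;> grind

end PaperMatrix

section LowerBound

variable {K : Type*} [Field K] [LinearOrder K] [IsStrictOrderedRing K]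
variable {d : ℕ} {W : Matrix (Fin 6) (Fin d) K} {H : Matrix (Fin d) (Fin 6) K}

theorem IsRNMF.eq_rowCoeffs_mul (h : IsRNMF (paperMatrix.map ((↑) : ℚ → K)) W H) :
    W = rowCoeffs K * W.submatrix ![0, 1, 2, 3] id := by
  obtain ⟨-, -, hmul, hrank⟩ := h
  obtain ⟨X, hX⟩ := exists_mul_eq_of_rank_eq (hmul ▸ hrank)
  have hW : W = rowCoeffs K * (topRows K * X) := by
    rw [← Matrix.mul_assoc, ← paperMatrix_map_cast, hmul, hX]
  have hT : W.submatrix ![0, 1, 2, 3] id = topRows K * X := by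
    rw [rowCoeffs_mul] at hW
    ext i k
    fin_cases i <;> simp [hW]
  rw [hT, ← hW]

theorem IsRNMF.row_four (h : IsRNMF (paperMatrix.map ((↑) : ℚ → K)) W H) (k : Fin d) :
    W 4 k = -W 0 k - 9 / 4 * W 1 k + 1 / 2 * W 2 k + W 3 k := by
  have hrow := congrFun (congrFun h.eq_rowCoeffs_mul 4) k
  rwa [rowCoeffs_mul] at hrow

theorem IsRNMF.row_five (h : IsRNMF (paperMatrix.map ((↑) : ℚ → K)) W H) (k : Fin d) :
    W 5 k = -W 0 k - 27 / 8 * W 1 k + 3 / 4 * W 2 k + W 3 k := by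
  have hrow := congrFun (congrFun h.eq_rowCoeffs_mul 5) k
  rwa [rowCoeffs_mul] at hrow

theorem IsRNMF.mem_faceCone_slackA (h : IsRNMF (paperMatrix.map ((↑) : ℚ → K)) W H) {k : Fin d}
    (hk : W 1 k = 0) : (W.submatrix ![0, 2, 3] id).col k ∈ faceCone (slackA K) := by
  refine ⟨fun i => h.1 _ k, (h.1 4 k).trans_eq ?_⟩
  simp only [h.row_four, hk, slackA, vec3_dotProduct, Matrix.cons_val, col_apply, submatrix_apply,
    id]
  ring

theorem IsRNMF.mem_faceCone_slackB (h : IsRNMF (paperMatrix.map ((↑) : ℚ → K)) W H) {k : Fin d}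
    (hk : W 0 k = 0) : (W.submatrix ![1, 3, 2] id).col k ∈ faceCone (slackB K) := by
  refine ⟨fun i => h.1 _ k, (h.1 5 k).trans_eq ?_⟩
  simp only [h.row_five, hk, slackB, vec3_dotProduct, Matrix.cons_val, col_apply, submatrix_apply,
    id]
  ring

theorem IsRNMF.pointsA_mem_hull (h : IsRNMF (paperMatrix.map ((↑) : ℚ → K)) W H) (i : Fin 3) :
    pointsA K i ∈ hull K
      ((W.submatrix ![0, 2, 3] id).col '' ({k | W 1 k = 0} : Finset (Fin d))) := by
  have hcol : pointsA K i =
      ((paperMatrix.map ((↑) : ℚ → K)).submatrix ![0, 2, 3] id).col (![0, 1, 2] i) := by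
    ext j
    rw [col_apply, submatrix_apply, map_apply]
    fin_cases i <;> fin_cases j <;> simp [pointsA, paperMatrix]
  rw [hcol]
  refine h.col_submatrix_mem_hull ?_ _
  rw [map_apply]
  fin_cases i <;> simp [paperMatrix]

theorem IsRNMF.pointsB_mem_hull (h : IsRNMF (paperMatrix.map ((↑) : ℚ → K)) W H) (i : Fin 3) :
    pointsB K i ∈ hull K
      ((W.submatrix ![1, 3, 2] id).col '' ({k | W 0 k = 0} : Finset (Fin d))) := by
  have hcol : pointsB K i =
      ((paperMatrix.map ((↑) : ℚ → K)).submatrix ![1, 3, 2] id).col (![5, 4, 3] i) := by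
    ext j
    rw [col_apply, submatrix_apply, map_apply]
    fin_cases i <;> fin_cases j <;> simp [pointsB, paperMatrix]
  rw [hcol]
  refine h.col_submatrix_mem_hull ?_ _
  rw [map_apply]
  fin_cases i <;> simp [paperMatrix]

theorem IsRNMF.exists_two_mul_sq_le_sq (h : IsRNMF (paperMatrix.map ((↑) : ℚ → K)) W H)
    (hoff : #{k ∈ ({k | W 1 k = 0} : Finset (Fin d)) | W 0 k ≠ 0} = 2)
    (hon : #{k ∈ ({k | W 1 k = 0} : Finset (Fin d)) | W 0 k = 0} ≤ 1) :
    ∃ k, W 0 k = 0 ∧ W 1 k = 0 ∧ (W 2 k ≠ 0 ∨ W 3 k ≠ 0) ∧ 2 * W 3 k ^ 2 ≤ W 2 k ^ 2 := by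
  obtain ⟨k, hk, hne, hapex⟩ := exists_isApex isFaceConfig_slackA.slack_two_pos.le
    (fun k hk => h.mem_faceCone_slackA (mem_filter.1 hk).2) h.pointsA_mem_hull hoff hon
    fun hcorner => by
      have := two_mul_sq_le_sq_of_isApex_slackA hcorner
      simp only [Matrix.cons_val] at this
      linarith
  refine ⟨k, hapex.1, (mem_filter.1 hk).2, ?_, two_mul_sq_le_sq_of_isApex_slackA hapex⟩
  by_contra! hzero
  refine hne (funext fun i => ?_)
  fin_cases i
  exacts [hapex.1, hzero.1, hzero.2]

theorem IsRNMF.exists_sq_le_two_mul_sq (h : IsRNMF (paperMatrix.map ((↑) : ℚ → K)) W H)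
    (hoff : #{k ∈ ({k | W 0 k = 0} : Finset (Fin d)) | W 1 k ≠ 0} = 2)
    (hon : #{k ∈ ({k | W 0 k = 0} : Finset (Fin d)) | W 1 k = 0} ≤ 1) :
    ∃ k, W 0 k = 0 ∧ W 1 k = 0 ∧ W 2 k ^ 2 ≤ 2 * W 3 k ^ 2 := by
  obtain ⟨k, hk, -, hapex⟩ := exists_isApex isFaceConfig_slackB.slack_two_pos.le
    (fun k hk => h.mem_faceCone_slackB (mem_filter.1 hk).2) h.pointsB_mem_hull hoff hon
    fun hcorner => by
      have := sq_le_two_mul_sq_of_isApex_slackB hcorner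
      simp only [Matrix.cons_val] at this
      linarith
  exact ⟨k, (mem_filter.1 hk).2, hapex.1, sq_le_two_mul_sq_of_isApex_slackB hapex⟩

theorem IsRNMF.isSquare_two (h : IsRNMF (paperMatrix.map ((↑) : ℚ → K)) W H)
    (hA : #{k ∈ ({k | W 1 k = 0} : Finset (Fin d)) | W 0 k ≠ 0} = 2)
    (hB : #{k ∈ ({k | W 0 k = 0} : Finset (Fin d)) | W 1 k ≠ 0} = 2)
    (hedge : #{k ∈ ({k | W 1 k = 0} : Finset (Fin d)) | W 0 k = 0} ≤ 1) : IsSquare (2 : K) := by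
  obtain ⟨k, hk0, hk1, hne, hAk⟩ := h.exists_two_mul_sq_le_sq hA hedge
  obtain ⟨l, hl0, hl1, hBl⟩ := h.exists_sq_le_two_mul_sq hB (by rwa [filter_comm])
  obtain rfl : k = l := card_le_one.1 hedge k (by simp [hk0, hk1]) l (by simp [hl0, hl1])
  have hsq : W 2 k ^ 2 = 2 * W 3 k ^ 2 := hBl.antisymm hAk
  have h3 : W 3 k ≠ 0 := by
    intro h3
    have h2 : W 2 k = 0 := by simpa [h3] using hsq
    exact hne.elim (· h2) (· h3)
  exact ⟨W 2 k / W 3 k, by field_simp; exact hsq.symm⟩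

theorem IsRNMF.five_le_and_isSquare_two (h : IsRNMF (paperMatrix.map ((↑) : ℚ → K)) W H)
    (hd : d ≤ 5) : 5 ≤ d ∧ IsSquare (2 : K) := by
  have hA2 : 2 ≤ #{k ∈ ({k | W 1 k = 0} : Finset (Fin d)) | W 0 k ≠ 0} :=
    isFaceConfig_slackA.two_le_card (fun k hk => h.mem_faceCone_slackA (mem_filter.1 hk).2)
      h.pointsA_mem_hull
  have hB2 : 2 ≤ #{k ∈ ({k | W 0 k = 0} : Finset (Fin d)) | W 1 k ≠ 0} :=
    isFaceConfig_slackB.two_le_card (fun k hk => h.mem_faceCone_slackB (mem_filter.1 hk).2)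
      h.pointsB_mem_hull
  have hcount := card_filter_add_card_filter_add_card_filter_le (W 0) (W 1)
  rw [Fintype.card_fin] at hcount
  have hedge : #{k ∈ ({k | W 1 k = 0} : Finset (Fin d)) | W 0 k = 0} ≤ 1 := by omega
  have hedge_pos : 0 < #{k ∈ ({k | W 1 k = 0} : Finset (Fin d)) | W 0 k = 0} := by
    rw [card_pos]
    obtain hA | hB : #{k ∈ ({k | W 1 k = 0} : Finset (Fin d)) | W 0 k ≠ 0} = 2 ∨
        #{k ∈ ({k | W 0 k = 0} : Finset (Fin d)) | W 1 k ≠ 0} = 2 := by omega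
    · obtain ⟨k, hk0, hk1, -⟩ := h.exists_two_mul_sq_le_sq hA hedge
      exact ⟨k, by simp [hk0, hk1]⟩
    · obtain ⟨k, hk0, hk1, -⟩ := h.exists_sq_le_two_mul_sq hB (by rwa [filter_comm])
      exact ⟨k, by simp [hk0, hk1]⟩
  exact ⟨by omega, h.isSquare_two (by omega) (by omega) hedge⟩

end LowerBound

section UpperBound

variable {K : Type*} [Field K] [LinearOrder K] [IsStrictOrderedRing K]

theorem rightFactor_nonneg {s : K} (hs : 4 / 3 ≤ s) (hs' : s ≤ 3 / 2) (k : Fin 5) (j : Fin 6) :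
    0 ≤ rightFactor s k j := by
  fin_cases k <;> fin_cases j <;> simp [rightFactor] <;> linarith

theorem rowCoeffs_mul_topLeftFactor_nonneg {s : K} (hs : 4 / 3 ≤ s) (hs' : s ≤ 3 / 2) (i : Fin 6)
    (k : Fin 5) : 0 ≤ (rowCoeffs K * topLeftFactor s) i k := by
  rw [rowCoeffs_mul]
  fin_cases i <;> fin_cases k <;> simp [topLeftFactor] <;> linarith

theorem hasRNMF_five_of_isSquare_two (h : IsSquare (2 : K)) :
    HasRNMF (paperMatrix.map ((↑) : ℚ → K)) 5 := by
  obtain ⟨s, hs, hs2⟩ : ∃ s : K, 0 ≤ s ∧ s * s = 2 := by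
    obtain ⟨r, hr⟩ := h
    exact ⟨|r|, abs_nonneg r, by rw [abs_mul_abs_self, hr]⟩
  have hlower : 4 / 3 ≤ s := by nlinarith
  have hupper : s ≤ 3 / 2 := by nlinarith
  obtain ⟨R, hR⟩ := exists_topRows_mul_eq_one (K := K)
  have hfactor := topLeftFactor_mul_rightFactor hs2
  rw [paperMatrix_map_cast]
  exact ⟨rowCoeffs K * topLeftFactor s, rightFactor s,
    rowCoeffs_mul_topLeftFactor_nonneg hlower hupper, rightFactor_nonneg hlower hupper,
    by rw [Matrix.mul_assoc, hfactor], rank_eq_of_mul_eq_one hR hfactor⟩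

end UpperBound

end RestrictedNMF

open RestrictedNMF in
theorem stmt16_general (K : Type*) [Field K] [LinearOrder K] [IsStrictOrderedRing K] :
    (IsSquare (2 : K) → IsLeast {d | HasRNMF (paperMatrix.map ((↑) : ℚ → K)) d} 5) ∧
      (¬ IsSquare (2 : K) → IsLeast {d | HasRNMF (paperMatrix.map ((↑) : ℚ → K)) d} 6) := by
  have hlower {d : ℕ} (h : HasRNMF (paperMatrix.map ((↑) : ℚ → K)) d) (hd : d ≤ 5) :
      5 ≤ d ∧ IsSquare (2 : K) := by
    obtain ⟨W, H, hWH⟩ := h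
    exact hWH.five_le_and_isSquare_two hd
  refine ⟨fun hsq => ⟨hasRNMF_five_of_isSquare_two hsq, fun d hd => ?_⟩,
    fun hsq => ⟨hasRNMF_of_nonneg fun i j => ?_, fun d hd => ?_⟩⟩
  · by_contra! hlt
    exact hlt.not_ge (hlower hd hlt.le).1
  · exact Rat.cast_nonneg.2 (paperMatrix_nonneg i j)
  · by_contra! hlt
    exact hsq (hlower hd (Nat.le_of_lt_succ hlt)).2

/-- The restricted nonnegative rank of the matrix `M` above over `ℚ` equals `6`;
in particular there is no rational restricted NMF of `M` with inner dimension `5`,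
even though `rrk+(M) = 5` over `ℝ`. -/
theorem stmt16 :
    rrkPosQ paperMatrix = 6 ∧
    (¬ ∃ W : Matrix (Fin 6) (Fin 5) ℚ, ∃ H : Matrix (Fin 5) (Fin 6) ℚ,
      (∀ i k, 0 ≤ W i k) ∧ (∀ k j, 0 ≤ H k j) ∧ paperMatrix = W * H ∧
        W.rank = paperMatrix.rank) ∧
    rrkPos (paperMatrix.map ((↑) : ℚ → ℝ)) = 5 := by
  have hsq : ¬ IsSquare (2 : ℚ) := by norm_num
  have hQ : IsLeast {d | RestrictedNMF.HasRNMF paperMatrix d} 6 := by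
    simpa using (stmt16_general ℚ).2 hsq
  have hR := (stmt16_general ℝ).1 ⟨√2, by norm_num⟩
  exact ⟨hQ.csInf_eq, fun h5 => absurd (hQ.2 h5) (by norm_num), hR.csInf_eq⟩
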